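/- arXiv:2406.11488 — 2 statements merged into one kernel-verified Lean document; each statement's English description precedes it below -/
import Mathlib

section
/- Let T be a copyless parity streaming string transducer with n states, m registers and output alphabet B. Then there exist a deterministic one-way parity transducer D with n states (with the same underlying one-way parity automaton as T, whose output alphabet is the set of copyless substitutions of the registers of T into B, and which outputs on each transition the substitution that T applies) and a reversible two-way transducer F with 2m states and an empty set of coloring functions, such that ⟦T⟧ = ⟦F⟧ ∘ ⟦D⟧ as partial functions from A^ω to B^ω. -/
namespace Paper

/-! ## Two-way parity automata and transducers over infinite words.

An infinite word over an alphabet `A` is a function `ℕ → A`.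
A configuration `⊢ u p v` with `w = u v` is encoded as a pair `(p, |u|) : Q × ℕ`.
The left end-marker `⊢` is encoded as `(none : Option A)`. -/

/-- A two-way automaton (without acceptance condition): states `Q` partitioned into forward
states (`fwd`) and backward states, an initial forward state, and a transition relation `Δ`
over `Q × (A ∪ {⊢}) × Q` where transitions on the end-marker `⊢` (encoded `none`) go from
backward to forward states. -/
structure TwoWayAut (A : Type) where
  Q : Type
  finQ : Fintype Q
  fwd : Q → Prop
  init : Q
  init_fwd : fwd init
  Δ : Set (Q × Option A × Q)
  marker : ∀ p q, (p, (none : Option A), q) ∈ Δ → ¬ fwd p ∧ fwd q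

attribute [instance] TwoWayAut.finQ

variable {A B : Type}

/-- `StepVia M w c t c'` : from configuration `c`, using transition `t`, the automaton `M`
reaches the successor configuration `c'` on input word `w`. -/
def StepVia (M : TwoWayAut A) (w : ℕ → A) (c : M.Q × ℕ)
    (t : M.Q × Option A × M.Q) (c' : M.Q × ℕ) : Prop :=
  t ∈ M.Δ ∧ t.1 = c.1 ∧ t.2.2 = c'.1 ∧
    ((M.fwd c.1 ∧ t.2.1 = some (w c.2) ∧
        ((M.fwd c'.1 ∧ c'.2 = c.2 + 1) ∨ (¬ M.fwd c'.1 ∧ c'.2 = c.2))) ∨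
     (¬ M.fwd c.1 ∧ 0 < c.2 ∧ t.2.1 = some (w (c.2 - 1)) ∧
        ((M.fwd c'.1 ∧ c'.2 = c.2) ∨ (¬ M.fwd c'.1 ∧ c'.2 = c.2 - 1))) ∨
     (¬ M.fwd c.1 ∧ c.2 = 0 ∧ t.2.1 = none ∧ c'.2 = 0))

/-- The successor relation on configurations. -/
def Step (M : TwoWayAut A) (w : ℕ → A) (c c' : M.Q × ℕ) : Prop :=
  ∃ t, StepVia M w c t c'

/-- An infinite run of `M` on `w`, given by its configurations and the transitions taken. -/
def IsRun (M : TwoWayAut A) (w : ℕ → A) (cfg : ℕ → M.Q × ℕ)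
    (tr : ℕ → M.Q × Option A × M.Q) : Prop :=
  cfg 0 = (M.init, 0) ∧ ∀ i, StepVia M w (cfg i) (tr i) (cfg (i + 1))

/-- The run reads the whole word: the prefix lengths are unbounded. -/
def ReadsWhole (M : TwoWayAut A) (cfg : ℕ → M.Q × ℕ) : Prop :=
  ∀ n : ℕ, ∃ i, n ≤ (cfg i).2

/-- `t` occurs infinitely often in the sequence `tr`. -/
def InfOften {T : Type} (tr : ℕ → T) (t : T) : Prop :=
  ∀ n, ∃ i, n ≤ i ∧ tr i = t

def Deterministic (M : TwoWayAut A) : Prop :=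
  ∀ p a q q', (p, a, q) ∈ M.Δ → (p, a, q') ∈ M.Δ → q = q'

def Codeterministic (M : TwoWayAut A) : Prop :=
  ∀ p p' a q, (p, a, q) ∈ M.Δ → (p', a, q) ∈ M.Δ → p = p'

def Reversible (M : TwoWayAut A) : Prop :=
  Deterministic M ∧ Codeterministic M

def Oneway (M : TwoWayAut A) : Prop := ∀ q, M.fwd q

/-- A two-way parity automaton: a two-way automaton together with a finite family of
coloring functions (indexed by `CIdx`). -/
structure ParityAut (A : Type) extends TwoWayAut A where
  CIdx : Type
  finC : Fintype CIdx
  color : CIdx → (Q × Option A × Q) → ℕ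

attribute [instance] ParityAut.finC

/-- The parity acceptance condition: for every coloring function, the minimal color of the
transitions taken infinitely often is even. -/
def ParityCond (M : ParityAut A) (tr : ℕ → M.Q × Option A × M.Q) : Prop :=
  ∀ c : M.CIdx, Even (sInf {m : ℕ | ∃ t, InfOften tr t ∧ M.color c t = m})

/-- Acceptance of an infinite word by a two-way parity automaton. -/
def ParityAut.Accepts (M : ParityAut A) (w : ℕ → A) : Prop :=
  ∃ cfg tr, IsRun M.toTwoWayAut w cfg tr ∧ ReadsWhole M.toTwoWayAut cfg ∧ ParityCond M tr

/-- All colors of `M` (on its transitions) belong to `{0, …, ℓ-1}`. -/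
def ColorsLt (M : ParityAut A) (ℓ : ℕ) : Prop :=
  ∀ (c : M.CIdx) t, t ∈ M.Δ → M.color c t < ℓ

/-- `l` is a prefix of the infinite word `x`. -/
def IsPrefixOf {C : Type} (l : List C) (x : ℕ → C) : Prop :=
  ∀ (i : ℕ) (h : i < l.length), l.get ⟨i, h⟩ = x i

/-- Concatenation of the first `n` words of a sequence of finite words. -/
def prefixCat {C : Type} (f : ℕ → List C) : ℕ → List C
  | 0 => []
  | n + 1 => prefixCat f n ++ f n

/-- The concatenation of the sequence of finite words `f` is the infinite word `x`. -/
def FlattenTo {C : Type} (f : ℕ → List C) (x : ℕ → C) : Prop :=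
  (∀ n, IsPrefixOf (prefixCat f n) x) ∧ ∀ m, ∃ n, m ≤ (prefixCat f n).length

/-- A two-way parity transducer: a two-way parity automaton (whose underlying automaton is
required to be deterministic via hypotheses) together with an output function. -/
structure TwoWayTrans (A B : Type) extends ParityAut A where
  out : (Q × Option A × Q) → List B

/-- `T.Realizes w x` : the word `w` is accepted by (the deterministic transducer) `T`,
the produced output is infinite and equals `x`.  This is the graph of the partial function
`⟦T⟧ : A^ω ⇀ B^ω`. -/
def TwoWayTrans.Realizes (T : TwoWayTrans A B) (w : ℕ → A) (x : ℕ → B) : Prop :=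
  ∃ cfg tr, IsRun T.toTwoWayAut w cfg tr ∧ ReadsWhole T.toTwoWayAut cfg ∧
    ParityCond T.toParityAut tr ∧ FlattenTo (fun i => T.out (tr i)) x

/-- A two-way Büchi transducer: accepting transitions `acc` instead of coloring functions. -/
structure BuchiTrans (A B : Type) extends TwoWayAut A where
  acc : Set (Q × Option A × Q)
  out : (Q × Option A × Q) → List B

def BuchiTrans.Realizes (T : BuchiTrans A B) (w : ℕ → A) (x : ℕ → B) : Prop :=
  ∃ cfg tr, IsRun T.toTwoWayAut w cfg tr ∧ ReadsWhole T.toTwoWayAut cfg ∧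
    (∀ n, ∃ i, n ≤ i ∧ tr i ∈ T.acc) ∧ FlattenTo (fun i => T.out (tr i)) x

/-- A two-way transducer with no acceptance condition. -/
structure NoAccTrans (A B : Type) extends TwoWayAut A where
  out : (Q × Option A × Q) → List B

def NoAccTrans.Realizes (T : NoAccTrans A B) (w : ℕ → A) (x : ℕ → B) : Prop :=
  ∃ cfg tr, IsRun T.toTwoWayAut w cfg tr ∧ ReadsWhole T.toTwoWayAut cfg ∧
    FlattenTo (fun i => T.out (tr i)) x

/-! ## One-way parity automata, transducers, and copyless parity streaming string
transducers.  A one-way automaton has only forward states and never reads the end-marker,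
so we use a simplified (equivalent) presentation. -/

structure OnewayAut (A : Type) where
  Q : Type
  finQ : Fintype Q
  init : Q
  Δ : Set (Q × A × Q)
  CIdx : Type
  finC : Fintype CIdx
  color : CIdx → (Q × A × Q) → ℕ

attribute [instance] OnewayAut.finQ
attribute [instance] OnewayAut.finC

def OnewayDet (M : OnewayAut A) : Prop :=
  ∀ p a q q', (p, a, q) ∈ M.Δ → (p, a, q') ∈ M.Δ → q = q'

def OnewayRun (M : OnewayAut A) (w : ℕ → A) (s : ℕ → M.Q) : Prop :=
  s 0 = M.init ∧ ∀ i, (s i, w i, s (i + 1)) ∈ M.Δ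

def OnewayParityCond (M : OnewayAut A) (tr : ℕ → M.Q × A × M.Q) : Prop :=
  ∀ c : M.CIdx, Even (sInf {m : ℕ | ∃ t, InfOften tr t ∧ M.color c t = m})

def OnewayAut.Accepts (M : OnewayAut A) (w : ℕ → A) : Prop :=
  ∃ s, OnewayRun M w s ∧ OnewayParityCond M (fun i => (s i, w i, s (i + 1)))

def OnewayColorsLt (M : OnewayAut A) (ℓ : ℕ) : Prop :=
  ∀ (c : M.CIdx) t, t ∈ M.Δ → M.color c t < ℓ

/-- A one-way (deterministic) parity transducer. -/
structure OnewayTrans (A B : Type) extends OnewayAut A where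
  out : (Q × A × Q) → List B

def OnewayTrans.Realizes (T : OnewayTrans A B) (w : ℕ → A) (x : ℕ → B) : Prop :=
  ∃ s, OnewayRun T.toOnewayAut w s ∧
    OnewayParityCond T.toOnewayAut (fun i => (s i, w i, s (i + 1))) ∧
    FlattenTo (fun i => T.out (s i, w i, s (i + 1))) x

/-- Number of occurrences of `a` in the list `l` (classically). -/
noncomputable def occ {C : Type} (a : C) (l : List C) : ℕ :=
  l.countP fun x => @decide (x = a) (Classical.propDecidable _)

/-- A substitution `σ : R → (R ⊎ B)*` is copyless if every register occurs at most once in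
the concatenation of all the `σ r'`. -/
def Copyless {R C : Type} [Fintype R] (σ : R → List (R ⊕ C)) : Prop :=
  ∀ r : R, (∑ r' : R, occ (Sum.inl r) (σ r')) ≤ 1

/-- Applying an assignment `ν : R → B*` (extended to a morphism `(R ⊎ B)* → B*`). -/
def subApply {R C : Type} (ν : R → List C) : List (R ⊕ C) → List C
  | [] => []
  | Sum.inl r :: l => ν r ++ subApply ν l
  | Sum.inr b :: l => b :: subApply ν l

/-- A copyless parity streaming string transducer: a (deterministic) one-way parity
automaton with a finite set `R` of registers, a distinguished output register, and copyless
register updates, where the update of `outReg` always starts with `outReg`. -/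
structure CPSST (A B : Type) extends OnewayAut A where
  R : Type
  finR : Fintype R
  outReg : R
  upd : (Q × A × Q) → R → List (R ⊕ B)
  copyless : ∀ t, @Copyless R B finR (upd t)
  out_form : ∀ t, ∃ γ, upd t outReg = Sum.inl outReg :: γ

attribute [instance] CPSST.finR

/-- The register contents along a run: `ν_0 r = ε` and `ν_{i+1} = ν_i ∘ λ(t_i)`. -/
def regVal (T : CPSST A B) (w : ℕ → A) (s : ℕ → T.Q) : ℕ → T.R → List B
  | 0 => fun _ => []
  | i + 1 => fun r => subApply (regVal T w s i) (T.upd (s i, w i, s (i + 1)) r)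

/-- `T.Realizes w x` : the (deterministic) CPSST `T` has an accepting run on `w` whose
output-register contents are unbounded with limit `x`. -/
def CPSST.Realizes (T : CPSST A B) (w : ℕ → A) (x : ℕ → B) : Prop :=
  ∃ s, OnewayRun T.toOnewayAut w s ∧
    OnewayParityCond T.toOnewayAut (fun i => (s i, w i, s (i + 1))) ∧
    (∀ i, IsPrefixOf (regVal T w s i T.outReg) x) ∧
    (∀ m, ∃ i, m ≤ (regVal T w s i T.outReg).length)

/-- The one-way parity transducer with the same underlying automaton as the CPSST `T`,
which outputs on each transition the (copyless) substitution that `T` applies. -/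
def enrich (T : CPSST A B) :
    OnewayTrans A {σ : T.R → List (T.R ⊕ B) // Copyless σ} where
  toOnewayAut := T.toOnewayAut
  out := fun t => [⟨T.upd t, T.copyless t⟩]

/-! ## Merging forests -/

/-- A merging forest on `(Q⁺ ⊎ Q⁻, χ, ℓ)`: a finite rooted forest (given by a `parent` map
with no cycles) whose leaves (childless nodes) are injectively labeled in `Q⁻` and carry a
`χ`-tuple of integers `< ℓ`, whose roots are injectively labeled in `Q⁺`, and in which every
unary node (exactly one child) is a root. -/
structure MForest (Qp Qm χ : Type) (ℓ : ℕ) where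
  V : Type
  finV : Fintype V
  parent : V → Option V
  acyc : ∀ v : V, ¬ Relation.TransGen (fun a b => parent a = some b) v v
  leafLab : V → Qm
  rootLab : V → Qp
  tup : V → χ → ℕ
  tup_lt : ∀ v, (∀ u, parent u ≠ some v) → ∀ c, tup v c < ℓ
  leaf_inj : ∀ u v, (∀ u', parent u' ≠ some u) → (∀ v', parent v' ≠ some v) →
    leafLab u = leafLab v → u = v
  root_inj : ∀ u v, parent u = none → parent v = none → rootLab u = rootLab v → u = v
  unary_root : ∀ v : V, (∃! u, parent u = some v) → parent v = none

attribute [instance] MForest.finV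

/-- Isomorphism of merging forests: a bijection of the nodes commuting with `parent` and
preserving the leaf labels, the leaf tuples and the root labels. -/
def MFIso {Qp Qm χ : Type} {ℓ : ℕ} (F G : MForest Qp Qm χ ℓ) : Prop :=
  ∃ e : F.V ≃ G.V,
    (∀ v, G.parent (e v) = Option.map e (F.parent v)) ∧
    (∀ v, (∀ u, F.parent u ≠ some v) →
      F.leafLab v = G.leafLab (e v) ∧ ∀ c, F.tup v c = G.tup (e v) c) ∧
    (∀ v, F.parent v = none → F.rootLab v = G.rootLab (e v))

end Paper

namespace Paper

section Aux

variable {R C : Type}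

/-- A list that is empty or starts with a register. -/
def RegStart (v : List (R ⊕ C)) : Prop := v = [] ∨ ∃ s v0, v = Sum.inl s :: v0

/-- A list that is empty or ends with a register. -/
def RegEnd (u : List (R ⊕ C)) : Prop := u = [] ∨ ∃ u0 s, u = u0 ++ [Sum.inl s]

theorem split_unique : ∀ (b1 b2 : List C) (v1 v2 : List (R ⊕ C)),
    RegStart v1 → RegStart v2 →
    b1.map Sum.inr ++ v1 = b2.map Sum.inr ++ v2 → b1 = b2 ∧ v1 = v2 := by
  intro b1
  induction b1 with
  | nil =>
    intro b2 v1 v2 h1 h2 h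
    cases b2 with
    | nil => simpa using h
    | cons x b2 =>
      rcases h1 with rfl | ⟨s, v0, rfl⟩ <;> simp at h
  | cons x b1 ih =>
    intro b2 v1 v2 h1 h2 h
    cases b2 with
    | nil => rcases h2 with rfl | ⟨s, v0, rfl⟩ <;> simp at h
    | cons z b2 =>
      simp only [List.map_cons, List.cons_append, List.cons.injEq, Sum.inr.injEq] at h
      obtain ⟨h3, h4⟩ := ih b2 v1 v2 h1 h2 h.2
      exact ⟨by rw [h.1, h3], h4⟩

theorem split_unique_rev (b1 b2 : List C) (u1 u2 : List (R ⊕ C))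
    (h1 : RegEnd u1) (h2 : RegEnd u2)
    (h : u1 ++ b1.map Sum.inr = u2 ++ b2.map Sum.inr) : b1 = b2 ∧ u1 = u2 := by
  have key : ∀ u : List (R ⊕ C), RegEnd u → RegStart u.reverse := by
    intro u hu
    rcases hu with rfl | ⟨u0, s, rfl⟩
    · exact Or.inl rfl
    · exact Or.inr ⟨s, u0.reverse, by simp⟩
  have h' := congrArg List.reverse h
  rw [List.reverse_append, List.reverse_append, ← List.map_reverse, ← List.map_reverse] at h'
  obtain ⟨h3, h4⟩ := split_unique _ _ _ _ (key u1 h1) (key u2 h2) h'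
  exact ⟨List.reverse_injective h3, List.reverse_injective h4⟩

theorem split_exists : ∀ l : List (R ⊕ C), ∃ (b : List C) (v : List (R ⊕ C)),
    l = b.map Sum.inr ++ v ∧ RegStart v := by
  intro l
  induction l with
  | nil => exact ⟨[], [], rfl, Or.inl rfl⟩
  | cons a l ih =>
    obtain ⟨b, v, h, hv⟩ := ih
    cases a with
    | inl r => exact ⟨[], Sum.inl r :: l, rfl, Or.inr ⟨r, l, rfl⟩⟩
    | inr c => exact ⟨c :: b, v, by simp [h], hv⟩

theorem occ_append {D : Type} (a : D) (u v : List D) : occ a (u ++ v) = occ a u + occ a v := by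
  simp [occ, List.countP_append]

theorem occ_cons_self {D : Type} (a : D) (v : List D) : occ a (a :: v) = occ a v + 1 := by
  simp [occ]

theorem occ_unique_list {D : Type} (a : D) : ∀ (u1 u2 v1 v2 : List D),
    occ a (u1 ++ a :: v1) ≤ 1 → u1 ++ a :: v1 = u2 ++ a :: v2 → u1 = u2 ∧ v1 = v2 := by
  intro u1
  induction u1 with
  | nil =>
    intro u2 v1 v2 h e
    cases u2 with
    | nil => simpa using e
    | cons z u2 =>
      simp only [List.nil_append, List.cons_append, List.cons.injEq] at e
      obtain ⟨rfl, rfl⟩ := e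
      simp only [List.nil_append, occ_cons_self, occ_append] at h
      omega
  | cons x u1 ih =>
    intro u2 v1 v2 h e
    cases u2 with
    | nil =>
      simp only [List.nil_append, List.cons_append, List.cons.injEq] at e
      obtain ⟨rfl, rfl⟩ := e
      simp only [List.cons_append, occ_cons_self, occ_append] at h
      omega
    | cons z u2 =>
      simp only [List.cons_append, List.cons.injEq] at e
      have h' : occ a (u1 ++ a :: v1) ≤ 1 := by
        have := occ_append a [x] (u1 ++ a :: v1)
        simp only [List.cons_append, List.nil_append] at this h
        omega
      obtain ⟨h3, h4⟩ := ih u2 v1 v2 h' e.2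
      exact ⟨by rw [e.1, h3], h4⟩

theorem occ_unique [Fintype R] {σ : R → List (R ⊕ C)} (hσ : Copyless σ) {r r1 r2 : R}
    {u1 u2 v1 v2 : List (R ⊕ C)} (h1 : σ r1 = u1 ++ Sum.inl r :: v1)
    (h2 : σ r2 = u2 ++ Sum.inl r :: v2) : r1 = r2 ∧ u1 = u2 ∧ v1 = v2 := by
  classical
  have hs := hσ r
  have e1 : 1 ≤ occ (Sum.inl r) (σ r1) := by
    rw [h1, occ_append, occ_cons_self]; omega
  have e2 : 1 ≤ occ (Sum.inl r) (σ r2) := by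
    rw [h2, occ_append, occ_cons_self]; omega
  have hr : r1 = r2 := by
    by_contra hne
    have h3 : ∑ r' ∈ ({r1, r2} : Finset R), occ (Sum.inl r) (σ r') ≤
        ∑ r' : R, occ (Sum.inl r) (σ r') :=
      Finset.sum_le_sum_of_subset (Finset.subset_univ _)
    rw [Finset.sum_pair hne] at h3
    omega
  subst hr
  refine ⟨rfl, ?_⟩
  have h4 : occ (Sum.inl r) (σ r1) ≤ ∑ r' : R, occ (Sum.inl r) (σ r') :=
    Finset.single_le_sum (f := fun r' => occ (Sum.inl r) (σ r'))
      (fun _ _ => Nat.zero_le _) (Finset.mem_univ r1)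
  apply occ_unique_list (Sum.inl r)
  · rw [← h1]; omega
  · rw [← h1, ← h2]

theorem subApply_split (ν : R → List C) (b : List C) (v : List (R ⊕ C)) :
    subApply ν (b.map Sum.inr ++ v) = b ++ subApply ν v := by
  induction b with
  | nil => rfl
  | cons x b ih => simp [subApply, ih]

/-- `p` is the state reached after having treated the prefix `u` of `σ r'`. -/
def SrcOf (p : R × Bool) (r' : R) (u : List (R ⊕ C)) : Prop :=
  (u = [] ∧ p = (r', false)) ∨ ∃ u0 r, u = u0 ++ [Sum.inl r] ∧ p = (r, true)

/-- `q` is the state in which the suffix `v` of `σ r'` is still to be treated. -/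
def TgtOf (q : R × Bool) (r' : R) (v : List (R ⊕ C)) : Prop :=
  (v = [] ∧ q = (r', true)) ∨ ∃ s v0, v = Sum.inl s :: v0 ∧ q = (s, false)

/-- The transitions of `F` with their outputs, on a letter. -/
def TransB (σ : R → List (R ⊕ C)) (p q : R × Bool) (b : List C) : Prop :=
  ∃ r' u v, σ r' = u ++ (b.map Sum.inr ++ v) ∧ SrcOf p r' u ∧ TgtOf q r' v

theorem SrcOf.regEnd {p : R × Bool} {r' : R} {u : List (R ⊕ C)} (h : SrcOf p r' u) :
    RegEnd u := by
  rcases h with ⟨h, -⟩ | ⟨u0, r, h, -⟩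
  · exact Or.inl h
  · exact Or.inr ⟨u0, r, h⟩

theorem TgtOf.regStart {p : R × Bool} {r' : R} {u : List (R ⊕ C)} (h : TgtOf p r' u) :
    RegStart u := by
  rcases h with ⟨h, -⟩ | ⟨u0, r, h, -⟩
  · exact Or.inl h
  · exact Or.inr ⟨u0, r, h⟩

theorem SrcOf.unique {p p' : R × Bool} {r' : R} {u : List (R ⊕ C)} (h : SrcOf p r' u)
    (h' : SrcOf p' r' u) : p = p' := by
  rcases h with ⟨h, e⟩ | ⟨u0, r, h, e⟩ <;> rcases h' with ⟨h', e'⟩ | ⟨u0', r', h', e'⟩ <;>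
    subst h <;> simp_all

theorem TgtOf.unique {p p' : R × Bool} {r' : R} {u : List (R ⊕ C)} (h : TgtOf p r' u)
    (h' : TgtOf p' r' u) : p = p' := by
  rcases h with ⟨h, e⟩ | ⟨u0, r, h, e⟩ <;> rcases h' with ⟨h', e'⟩ | ⟨u0', r', h', e'⟩ <;>
    subst h <;> simp_all

theorem TransB.det [Fintype R] {σ : R → List (R ⊕ C)} (hσ : Copyless σ) {p q q' : R × Bool}
    {b b' : List C} (h : TransB σ p q b) (h' : TransB σ p q' b') : q = q' ∧ b = b' := by
  obtain ⟨r, u, v, e, hs, ht⟩ := h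
  obtain ⟨r', u', v', e', hs', ht'⟩ := h'
  have key : r = r' ∧ b.map Sum.inr ++ v = b'.map Sum.inr ++ v' := by
    rcases hs with ⟨h, k⟩ | ⟨u0, z, h, k⟩ <;> rcases hs' with ⟨h', k'⟩ | ⟨u0', z', h', k'⟩
    · have hr : r = r' := by rw [k] at k'; exact congrArg Prod.fst k'
      subst hr h h'
      exact ⟨rfl, by rw [e] at e'; simpa using e'⟩
    · rw [k] at k'; exact absurd (congrArg Prod.snd k') (by simp)
    · rw [k] at k'; exact absurd (congrArg Prod.snd k') (by simp)
    · have hz : z = z' := by rw [k] at k'; exact congrArg Prod.fst k'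
      subst hz h h'
      rw [List.append_assoc, List.singleton_append] at e e'
      have := occ_unique hσ e e'
      exact ⟨this.1, this.2.2⟩
  obtain ⟨rfl, key⟩ := key
  obtain ⟨rfl, rfl⟩ := split_unique _ _ _ _ ht.regStart ht'.regStart key
  exact ⟨ht.unique ht', rfl⟩

theorem TransB.codet [Fintype R] {σ : R → List (R ⊕ C)} (hσ : Copyless σ) {p p' q : R × Bool}
    {b b' : List C} (h : TransB σ p q b) (h' : TransB σ p' q b') : p = p' := by
  obtain ⟨r, u, v, e, hs, ht⟩ := h
  obtain ⟨r', u', v', e', hs', ht'⟩ := h'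
  have key : r = r' ∧ u ++ b.map Sum.inr = u' ++ b'.map Sum.inr := by
    rcases ht with ⟨h, k⟩ | ⟨z, v0, h, k⟩ <;> rcases ht' with ⟨h', k'⟩ | ⟨z', v0', h', k'⟩
    · have hr : r = r' := by rw [k] at k'; exact congrArg Prod.fst k'
      subst hr h h'
      exact ⟨rfl, by rw [e] at e'; simpa using e'⟩
    · rw [k] at k'; exact absurd (congrArg Prod.snd k') (by simp)
    · rw [k] at k'; exact absurd (congrArg Prod.snd k') (by simp)
    · have hz : z = z' := by rw [k] at k'; exact congrArg Prod.fst k'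
      subst hz h h'
      rw [← List.append_assoc] at e e'
      have := occ_unique hσ e e'
      exact ⟨this.1, this.2.1⟩
  obtain ⟨rfl, key⟩ := key
  obtain ⟨rfl, rfl⟩ := split_unique_rev _ _ _ _ hs.regEnd hs'.regEnd key
  have res := hs.unique hs'
  exact res

/-- The transition relation of `F`. -/
def FDelta (R C : Type) [Fintype R] :
    Set ((R × Bool) × Option {σ : R → List (R ⊕ C) // Copyless σ} × (R × Bool)) :=
  {t | match t with
    | (p, some σ, q) => ∃ b, TransB σ.1 p q b
    | (p, none, q) => p.2 = false ∧ q = (p.1, true)}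

open Classical in
/-- The output function of `F`. -/
noncomputable def FOut (R C : Type) [Fintype R] :
    ((R × Bool) × Option {σ : R → List (R ⊕ C) // Copyless σ} × (R × Bool)) → List C :=
  fun t => match t with
    | (p, some σ, q) => if h : ∃ b, TransB σ.1 p q b then h.choose else []
    | (_, none, _) => []

theorem FOut_eq [Fintype R] {σ : {σ : R → List (R ⊕ C) // Copyless σ}} {p q : R × Bool}
    {b : List C} (h : TransB σ.1 p q b) : FOut R C (p, some σ, q) = b := by
  have hex : ∃ b, TransB σ.1 p q b := ⟨b, h⟩
  simp only [FOut, dif_pos hex]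
  exact (hex.choose_spec.det σ.2 h).2

/-- The two-way transducer `F`. -/
noncomputable def FTrans (R C : Type) [Fintype R] (o : R) :
    TwoWayTrans {σ : R → List (R ⊕ C) // Copyless σ} C where
  Q := R × Bool
  finQ := inferInstance
  fwd := fun q => q.2 = true
  init := (o, true)
  init_fwd := rfl
  Δ := FDelta R C
  marker := by
    intro p q h
    obtain ⟨h1, h2⟩ : p.2 = false ∧ q = (p.1, true) := h
    subst h2
    exact ⟨by simp [h1], rfl⟩
  CIdx := Empty
  finC := inferInstance
  color := fun c => c.elim
  out := FOut R C

theorem FTrans_reversible [Fintype R] (o : R) : Reversible (FTrans R C o).toTwoWayAut := by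
  constructor
  · intro p a q q' h h'
    cases a with
    | none =>
      have h1 : p.2 = false ∧ q = (p.1, true) := h
      have h2 : p.2 = false ∧ q' = (p.1, true) := h'
      rw [h1.2, h2.2]
    | some σ =>
      obtain ⟨b, hb⟩ : ∃ b, TransB σ.1 p q b := h
      obtain ⟨b', hb'⟩ : ∃ b, TransB σ.1 p q' b := h'
      exact (hb.det σ.2 hb').1
  · intro p p' a q h h'
    cases a with
    | none =>
      have h1 : p.2 = false ∧ q = (p.1, true) := h
      have h2 : p'.2 = false ∧ q = (p'.1, true) := h'
      have h3 : p.1 = p'.1 := by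
        have := h1.2.symm.trans h2.2
        exact (Prod.mk.inj this).1
      exact Prod.ext h3 (h1.1.trans h2.1.symm)
    | some σ =>
      obtain ⟨b, hb⟩ : ∃ b, TransB σ.1 p q b := h
      obtain ⟨b', hb'⟩ : ∃ b, TransB σ.1 p' q b := h'
      have res := hb.codet σ.2 hb'
      exact res

/-- Steps of a deterministic automaton are unique. -/
theorem stepVia_unique {A : Type} {M : TwoWayAut A} (hM : Deterministic M) {w : ℕ → A}
    {c d d' : M.Q × ℕ} {t t' : M.Q × Option A × M.Q}
    (h : StepVia M w c t d) (h' : StepVia M w c t' d') : t = t' ∧ d = d' := by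
  obtain ⟨p, a, q⟩ := t
  obtain ⟨p', a', q'⟩ := t'
  obtain ⟨d, j⟩ := d
  obtain ⟨d', j'⟩ := d'
  obtain ⟨h1, h2, h3, h4⟩ := h
  obtain ⟨h1', h2', h3', h4'⟩ := h'
  simp only at h2 h3 h2' h3' h4 h4'
  have ha : a = a' := by
    rcases h4 with h4 | h4 | h4 <;> rcases h4' with h4' | h4' | h4'
    · rw [h4.2.1, h4'.2.1]
    · exact absurd h4.1 h4'.1
    · exact absurd h4.1 h4'.1
    · exact absurd h4'.1 h4.1
    · rw [h4.2.2.1, h4'.2.2.1]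
    · omega
    · exact absurd h4'.1 h4.1
    · omega
    · rw [h4.2.2.1, h4'.2.2.1]
  subst ha h2 h2' h3 h3'
  have hq := hM _ _ _ _ h1 h1'
  subst hq
  refine ⟨rfl, Prod.ext rfl ?_⟩
  simp only
  by_cases hd : M.fwd q
  · simp only [hd, true_and, not_true, false_and, or_false] at h4 h4'
    rcases h4 with h4 | h4 | h4 <;> rcases h4' with h4' | h4' | h4' <;>
      first | omega | exact absurd h4.1 h4'.1 | exact absurd h4'.1 h4.1
  · simp only [hd, true_and, not_false_eq_true, false_and, false_or] at h4 h4'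
    rcases h4 with h4 | h4 | h4 <;> rcases h4' with h4' | h4' | h4' <;>
      first | omega | exact absurd h4.1 h4'.1 | exact absurd h4'.1 h4.1

/-- Finite paths together with their output. -/
inductive Reach {A B : Type} (T : TwoWayTrans A B) (y : ℕ → A) :
    T.Q × ℕ → List B → T.Q × ℕ → Prop
  | refl (c) : Reach T y c [] c
  | head {c t d l e} : StepVia T.toTwoWayAut y c t d → Reach T y d l e →
      Reach T y c (T.out t ++ l) e

theorem Reach.trans {A B : Type} {T : TwoWayTrans A B} {y : ℕ → A} {c d e : T.Q × ℕ}
    {l l' : List B} (h : Reach T y c l d) (h' : Reach T y d l' e) :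
    Reach T y c (l ++ l') e := by
  induction h with
  | refl c => exact h'
  | head hs _ ih => rw [List.append_assoc]; exact Reach.head hs (ih h')

theorem Reach.follow {A B : Type} {T : TwoWayTrans A B} {y : ℕ → A}
    (hT : Deterministic T.toTwoWayAut)
    {cfg : ℕ → T.Q × ℕ} {tr : ℕ → T.Q × Option A × T.Q}
    (hrun : IsRun T.toTwoWayAut y cfg tr) {c d : T.Q × ℕ} {l : List B}
    (h : Reach T y c l d) : ∀ k, cfg k = c → ∃ k', k ≤ k' ∧ cfg k' = d ∧
      prefixCat (fun i => T.out (tr i)) k' = prefixCat (fun i => T.out (tr i)) k ++ l := by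
  induction h with
  | refl c => intro k hk; exact ⟨k, le_refl _, hk, by simp⟩
  | @head c t d l e hs _ ih =>
    intro k hk
    have h1 := hrun.2 k
    rw [hk] at h1
    obtain ⟨h2, h3⟩ := stepVia_unique hT hs h1
    obtain ⟨k', h4, h5, h6⟩ := ih (k + 1) h3.symm
    refine ⟨k', by omega, h5, ?_⟩
    rw [h6, h2]
    simp [prefixCat]

/-- Register contents along a word of substitutions. -/
def nuVal [Fintype R] (y : ℕ → {σ : R → List (R ⊕ C) // Copyless σ}) : ℕ → R → List C
  | 0 => fun _ => []
  | i + 1 => fun r => subApply (nuVal y i) ((y i).1 r)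

variable [Fintype R] (o : R) (y : ℕ → {σ : R → List (R ⊕ C) // Copyless σ})

/-- The position of the head in state `p` while treating the letter at position `i`. -/
def posOf (p : R × Bool) (i : ℕ) : ℕ := if p.2 = true then i else i + 1

theorem step_of_transB {p q : R × Bool} {b : List C} {i : ℕ} (h : TransB (y i).1 p q b) :
    StepVia (FTrans R C o).toTwoWayAut y (p, posOf p i) (p, some (y i), q)
      (q, if q.2 = true then i + 1 else i) := by
  refine ⟨⟨b, h⟩, rfl, rfl, ?_⟩
  have hf : ∀ q : R × Bool, (FTrans R C o).fwd q ↔ q.2 = true := fun _ => Iff.rfl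
  obtain ⟨p, pb⟩ := p
  obtain ⟨q, qb⟩ := q
  cases pb <;> cases qb <;> simp [hf, posOf]

theorem reach_list (i : ℕ)
    (ih : ∀ s, Reach (FTrans R C o) y ((s, false), i) (nuVal y i s) ((s, true), i)) (r' : R) :
    ∀ (n : ℕ) (rest u : List (R ⊕ C)) (p : R × Bool), rest.length ≤ n →
      (y i).1 r' = u ++ rest → SrcOf p r' u →
      Reach (FTrans R C o) y (p, posOf p i) (subApply (nuVal y i) rest) ((r', true), i + 1) := by
  intro n
  induction n with
  | zero =>
    intro rest u p hl e hs
    have : rest = [] := List.length_eq_zero_iff.mp (by omega)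
    subst this
    have ht : TransB (y i).1 p (r', true) [] := ⟨r', u, [], by simpa using e, hs, Or.inl ⟨rfl, rfl⟩⟩
    have := Reach.head (T := FTrans R C o) (step_of_transB o y ht) (Reach.refl _)
    have ho : (FTrans R C o).out (p, some (y i), (r', true)) = [] := FOut_eq ht
    rw [ho] at this
    simpa [subApply] using this
  | succ n ihn =>
    intro rest u p hl e hs
    obtain ⟨b, v, rfl, hv⟩ := split_exists rest
    rw [subApply_split]
    rcases hv with rfl | ⟨s, v0, rfl⟩
    · have ht : TransB (y i).1 p (r', true) b := ⟨r', u, [], e, hs, Or.inl ⟨rfl, rfl⟩⟩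
      have := Reach.head (T := FTrans R C o) (step_of_transB o y ht) (Reach.refl _)
      have ho : (FTrans R C o).out (p, some (y i), (r', true)) = b := FOut_eq ht
      rw [ho] at this
      simpa [subApply] using this
    · have ht : TransB (y i).1 p (s, false) b :=
        ⟨r', u, _, e, hs, Or.inr ⟨s, v0, rfl, rfl⟩⟩
      have hst := step_of_transB o y ht
      have ho : (FTrans R C o).out (p, some (y i), (s, false)) = b := FOut_eq ht
      have h2 := ihn v0 (u ++ b.map Sum.inr ++ [Sum.inl s]) (s, true)
        (by simp only [List.length_append, List.length_cons] at hl; omega)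
        (by rw [e]; simp) (Or.inr ⟨_, s, rfl, rfl⟩)
      have h3 := Reach.head (T := FTrans R C o) hst ((ih s).trans h2)
      rw [ho] at h3
      exact h3

theorem reach_reg : ∀ (i : ℕ) (s : R),
    Reach (FTrans R C o) y ((s, false), i) (nuVal y i s) ((s, true), i) := by
  intro i
  induction i with
  | zero =>
    intro s
    have hst : StepVia (FTrans R C o).toTwoWayAut y ((s, false), 0)
        ((s, false), none, (s, true)) ((s, true), 0) := by
      refine ⟨⟨rfl, rfl⟩, rfl, rfl, Or.inr (Or.inr ⟨?_, rfl, rfl, rfl⟩)⟩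
      intro h
      exact absurd h (by simp [FTrans])
    exact Reach.head (T := FTrans R C o) hst (Reach.refl _)
  | succ i ih =>
    intro s
    exact reach_list o y i ih s _ ((y i).1 s) [] (s, false) le_rfl rfl (Or.inl ⟨rfl, rfl⟩)

theorem reach_out (hy : ∀ i, ∃ γ, (y i).1 o = Sum.inl o :: γ) (i : ℕ) :
    ∃ l, Reach (FTrans R C o) y ((o, true), i) l ((o, true), i + 1) ∧
      nuVal y (i + 1) o = nuVal y i o ++ l := by
  obtain ⟨γ, hγ⟩ := hy i
  refine ⟨subApply (nuVal y i) γ, ?_, ?_⟩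
  · exact reach_list o y i (reach_reg o y i) o _ γ [Sum.inl o] (o, true) le_rfl
      (by rw [hγ]; rfl) (Or.inr ⟨[], o, rfl, rfl⟩)
  · simp [nuVal, hγ, subApply]

/-- Configurations from which the main line of checkpoints is reached. -/
def Good (c : (FTrans R C o).Q × ℕ) : Prop :=
  ∃ i l, Reach (FTrans R C o) y c l ((o, true), i)

theorem good_step (hy : ∀ i, ∃ γ, (y i).1 o = Sum.inl o :: γ)
    (c : (FTrans R C o).Q × ℕ) (h : Good o y c) :
    ∃ t d, StepVia (FTrans R C o).toTwoWayAut y c t d ∧ Good o y d := by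
  have main : ∀ (c e : (FTrans R C o).Q × ℕ) l, Reach (FTrans R C o) y c l e →
      c ≠ e → ∀ i, e = ((o, true), i) →
      ∃ t d, StepVia (FTrans R C o).toTwoWayAut y c t d ∧ Good o y d := by
    intro c e l h hne i he
    cases h with
    | refl => exact absurd rfl hne
    | head hs hr => subst he; exact ⟨_, _, hs, i, _, hr⟩
  obtain ⟨i, l, h⟩ := h
  by_cases hc : c = ((o, true), i)
  · obtain ⟨l', h', -⟩ := reach_out o y hy i
    rw [hc]
    refine main _ _ _ h' ?_ (i + 1) rfl
    intro he
    have := congrArg Prod.snd he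
    simp at this
  · exact main _ _ _ h hc i rfl

theorem exists_run (hy : ∀ i, ∃ γ, (y i).1 o = Sum.inl o :: γ) :
    ∃ cfg tr, IsRun (FTrans R C o).toTwoWayAut y cfg tr := by
  choose ft fd hst hg using good_step o y hy
  let c0 : {c // Good o y c} := ⟨((o, true), 0), 0, [], Reach.refl _⟩
  let sq : ℕ → {c // Good o y c} := fun n =>
    Nat.rec c0 (fun _ c => ⟨fd c.1 c.2, hg c.1 c.2⟩) n
  exact ⟨fun n => (sq n).1, fun n => ft (sq n).1 (sq n).2, rfl, fun n => hst _ _⟩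

theorem run_checkpoint (hy : ∀ i, ∃ γ, (y i).1 o = Sum.inl o :: γ)
    {cfg : ℕ → (FTrans R C o).Q × ℕ} {tr}
    (hrun : IsRun (FTrans R C o).toTwoWayAut y cfg tr) (i : ℕ) :
    ∃ k, i ≤ k ∧ cfg k = ((o, true), i) ∧
      prefixCat (fun i => (FTrans R C o).out (tr i)) k = nuVal y i o := by
  induction i with
  | zero => exact ⟨0, le_rfl, hrun.1, rfl⟩
  | succ i ih =>
    obtain ⟨k, h1, h2, h3⟩ := ih
    obtain ⟨l, hr, hl⟩ := reach_out o y hy i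
    obtain ⟨k', h4, h5, h6⟩ := hr.follow (FTrans_reversible o).1 hrun k h2
    refine ⟨k', ?_, h5, by rw [h6, h3, hl]⟩
    have : k ≠ k' := by
      rintro rfl
      rw [h2] at h5
      have := congrArg Prod.snd h5
      simp at this
    omega

theorem prefixCat_mono {D : Type} (f : ℕ → List D) {n k : ℕ} (h : n ≤ k) :
    prefixCat f n <+: prefixCat f k := by
  induction k, h using Nat.le_induction with
  | base => exact List.prefix_refl _
  | succ k _ ih => exact ih.trans (List.prefix_append _ _)

theorem isPrefixOf_of_prefix {D : Type} {l l' : List D} {x : ℕ → D} (h : l <+: l')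
    (h' : IsPrefixOf l' x) : IsPrefixOf l x := by
  intro i hi
  obtain ⟨r, rfl⟩ := h
  have := h' i (by simp; omega)
  rw [← this]
  simp [List.getElem_append_left hi]

theorem flatten_iff (hy : ∀ i, ∃ γ, (y i).1 o = Sum.inl o :: γ)
    {cfg : ℕ → (FTrans R C o).Q × ℕ} {tr}
    (hrun : IsRun (FTrans R C o).toTwoWayAut y cfg tr) (x : ℕ → C) :
    FlattenTo (fun i => (FTrans R C o).out (tr i)) x ↔
      (∀ i, IsPrefixOf (nuVal y i o) x) ∧ ∀ m, ∃ i, m ≤ (nuVal y i o).length := by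
  constructor
  · rintro ⟨h1, h2⟩
    refine ⟨fun i => ?_, fun m => ?_⟩
    · obtain ⟨k, -, -, hk⟩ := run_checkpoint o y hy hrun i
      rw [← hk]; exact h1 k
    · obtain ⟨n, hn⟩ := h2 m
      obtain ⟨k, hnk, -, hk⟩ := run_checkpoint o y hy hrun n
      refine ⟨n, ?_⟩
      rw [← hk]
      exact hn.trans (prefixCat_mono _ hnk).length_le
  · rintro ⟨h1, h2⟩
    refine ⟨fun n => ?_, fun m => ?_⟩
    · obtain ⟨k, hnk, -, hk⟩ := run_checkpoint o y hy hrun n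
      refine isPrefixOf_of_prefix (prefixCat_mono _ hnk) ?_
      rw [hk]; exact h1 n
    · obtain ⟨i, hi⟩ := h2 m
      obtain ⟨k, -, -, hk⟩ := run_checkpoint o y hy hrun i
      exact ⟨k, by rw [hk]; exact hi⟩

theorem FTrans_realizes (hy : ∀ i, ∃ γ, (y i).1 o = Sum.inl o :: γ) (x : ℕ → C) :
    (FTrans R C o).Realizes y x ↔
      (∀ i, IsPrefixOf (nuVal y i o) x) ∧ ∀ m, ∃ i, m ≤ (nuVal y i o).length := by
  constructor
  · rintro ⟨cfg, tr, hrun, -, -, hfl⟩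
    exact (flatten_iff o y hy hrun x).1 hfl
  · intro h
    obtain ⟨cfg, tr, hrun⟩ := exists_run o y hy
    refine ⟨cfg, tr, hrun, fun n => ?_, fun c => Empty.elim c,
      (flatten_iff o y hy hrun x).2 h⟩
    obtain ⟨k, -, hk, -⟩ := run_checkpoint o y hy hrun n
    exact ⟨k, by rw [hk]⟩

end Aux

theorem prefixCat_singleton {D : Type} (f : ℕ → D) (n : ℕ) :
    prefixCat (fun i => [f i]) n = (List.range n).map f := by
  induction n with
  | zero => rfl
  | succ n ih => simp [prefixCat, ih, List.range_succ]

theorem flatten_singleton {D : Type} (f x : ℕ → D) :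
    FlattenTo (fun i => [f i]) x ↔ x = f := by
  constructor
  · rintro ⟨h, -⟩
    funext i
    have := h (i + 1)
    rw [prefixCat_singleton] at this
    have := this i (by simp)
    rw [← this]
    simp
  · rintro rfl
    refine ⟨fun n => ?_, fun m => ⟨m, by rw [prefixCat_singleton]; simp⟩⟩
    rw [prefixCat_singleton]
    intro i hi
    simp

theorem regVal_eq_nuVal {A B : Type} (T : CPSST A B) (w : ℕ → A) (s : ℕ → T.Q) (i : ℕ) :
    regVal T w s i =
      nuVal (fun i => ⟨T.upd (s i, w i, s (i + 1)), T.copyless _⟩) i := by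
  induction i with
  | zero => rfl
  | succ i ih => funext r; simp only [regVal, nuVal, ih]

/-- For every copyless parity SST `T` with `n` states and `m` registers,
`⟦T⟧ = ⟦F⟧ ∘ ⟦D⟧` where `D = enrich T` is the deterministic one-way parity transducer with
the same underlying automaton as `T` (hence `n` states) whose output alphabet is the set of
copyless substitutions and which outputs on each transition the substitution `T` applies,
and `F` is a reversible two-way transducer with `2m` states and no coloring functions. -/
theorem cpsst_decomposition (A B : Type) [Fintype A] [Fintype B]
    (T : CPSST A B) (n m : ℕ)
    (hdet : OnewayDet T.toOnewayAut)
    (hn : Fintype.card T.Q = n) (hm : Fintype.card T.R = m) :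
    ∃ F : TwoWayTrans {σ : T.R → List (T.R ⊕ B) // Copyless σ} B,
      Reversible F.toTwoWayAut ∧
      Fintype.card F.Q = 2 * m ∧
      IsEmpty F.CIdx ∧
      Fintype.card (enrich T).Q = n ∧
      (∀ w x, T.Realizes w x ↔ ∃ y, (enrich T).Realizes w y ∧ F.Realizes y x) := by
  refine ⟨FTrans T.R B T.outReg, FTrans_reversible _, ?_, inferInstanceAs (IsEmpty Empty),
    hn, ?_⟩
  · have h : Fintype.card (T.R × Bool) = 2 * m := by
      rw [Fintype.card_prod, hm, Fintype.card_bool, mul_comm]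
    exact h
  · intro w x
    constructor
    · rintro ⟨s, hrun, hpar, hx⟩
      refine ⟨fun i => ⟨T.upd (s i, w i, s (i + 1)), T.copyless _⟩,
        ⟨s, hrun, hpar, (flatten_singleton _ _).2 rfl⟩, ?_⟩
      rw [FTrans_realizes _ _ (fun i => T.out_form _)]
      simpa only [regVal_eq_nuVal] using hx
    · rintro ⟨y, ⟨s, hrun, hpar, hfl⟩, hF⟩
      have hy := (flatten_singleton
        (fun i => (⟨T.upd (s i, w i, s (i + 1)), T.copyless _⟩ :
          {σ : T.R → List (T.R ⊕ B) // Copyless σ})) y).1 hfl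
      subst hy
      rw [FTrans_realizes _ _ (fun i => T.out_form _)] at hF
      refine ⟨s, hrun, hpar, fun i => ?_, fun k => ?_⟩
      · rw [regVal_eq_nuVal T w s i]
        exact hF.1 i
      · obtain ⟨i, hi⟩ := hF.2 k
        refine ⟨i, ?_⟩
        rw [regVal_eq_nuVal T w s i]
        exact hi

end Paper
end

section
/- Let Q = Q⁺ ⊎ Q⁻ be a finite set of size n > 0 with Q⁺ ≠ ∅, let χ be a finite set of size k ≥ 0 and let ℓ > 0. Then every merging forest F on (Q, χ, ℓ) has at most 2n−2 nodes and at most 2n−2 edges, and the number of merging forests on (Q, χ, ℓ) is at most ℓ^{k(n−1)}·(2n−1)^{2n−3} (bound read in the nonnegative reals). -/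
namespace Paper

section Aux

variable {Qp Qm χ : Type} {ℓ : ℕ}

def MForest.Leaf (F : MForest Qp Qm χ ℓ) (v : F.V) : Prop := ∀ u, F.parent u ≠ some v

def MForest.Rt (F : MForest Qp Qm χ ℓ) (v : F.V) : Prop := F.parent v = none

/-- Existence of a root in a nonempty forest. -/
theorem MForest.exists_root (F : MForest Qp Qm χ ℓ) (v₀ : F.V) : ∃ v, F.Rt v := by
  let r : F.V → F.V → Prop := fun b a => Relation.TransGen (fun a b => F.parent a = some b) a b
  have : IsTrans F.V r := ⟨fun a b c h1 h2 => Relation.TransGen.trans h2 h1⟩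
  have : Std.Irrefl r := ⟨fun a => F.acyc a⟩
  have wf : WellFounded r := Finite.wellFounded_of_trans_of_irrefl r
  obtain ⟨v, -, hv⟩ := wf.has_min Set.univ ⟨v₀, trivial⟩
  refine ⟨v, ?_⟩
  unfold MForest.Rt
  cases h : F.parent v with
  | none => rfl
  | some u => exact (hv u trivial (Relation.TransGen.single h)).elim

open Classical in
theorem MForest.counts [Fintype Qm] (F : MForest Qp Qm χ ℓ) :
    (Finset.univ.filter fun v : F.V => ¬ F.Leaf v ∧ ¬ F.Rt v).card
      + (Finset.univ.filter fun v : F.V => F.Rt v).card ≤ Fintype.card Qm ∧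
    Fintype.card F.V ≤ 2 * Fintype.card Qm := by
  have hL : (Finset.univ.filter fun v : F.V => F.Leaf v).card ≤ Fintype.card Qm := by
    rw [← Finset.card_univ]
    apply Finset.card_le_card_of_injOn F.leafLab (by simp)
    intro u hu v hv h
    simp only [Finset.coe_filter, Finset.mem_univ, true_and, Set.mem_ofPred_eq] at hu hv
    exact F.leaf_inj u v hu hv h
  have hch : ∑ v : F.V, (Finset.univ.filter fun u : F.V => F.parent u = some v).card
      + (Finset.univ.filter fun v : F.V => F.Rt v).card = Fintype.card F.V := by
    have h1 : ∑ v : F.V, (Finset.univ.filter fun u : F.V => F.parent u = some v).card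
      = (Finset.univ.filter fun v : F.V => ¬ F.Rt v).card := by
      simp only [Finset.card_filter]
      rw [Finset.sum_comm]
      apply Finset.sum_congr rfl
      intro u _
      unfold MForest.Rt
      cases h : F.parent u with
      | none => simp
      | some w => simp
    rw [h1, add_comm, Finset.card_filter_add_card_filter_not, Finset.card_univ]
  have key : ∀ v : F.V, 1 + (if ¬ F.Leaf v ∧ ¬ F.Rt v then 1 else 0) ≤
      (Finset.univ.filter fun u : F.V => F.parent u = some v).card
        + (if F.Leaf v then 1 else 0) := by
    intro v
    by_cases hl : F.Leaf v
    · simp [hl]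
    · have hpos : 0 < (Finset.univ.filter fun u : F.V => F.parent u = some v).card := by
        unfold MForest.Leaf at hl
        push Not at hl
        obtain ⟨u, hu⟩ := hl
        exact Finset.card_pos.2 ⟨u, by simp [hu]⟩
      by_cases hr : F.Rt v
      · simp [hl, hr]; simpa using hpos
      · have hne : (Finset.univ.filter fun u : F.V => F.parent u = some v).card ≠ 1 := by
          intro h1
          obtain ⟨u, hu⟩ := Finset.card_eq_one.1 h1
          apply hr
          apply F.unary_root v
          refine ⟨u, ?_, ?_⟩
          · have : u ∈ (Finset.univ.filter fun u : F.V => F.parent u = some v) := by simp [hu]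
            simpa using this
          · intro w hw
            have : w ∈ (Finset.univ.filter fun u : F.V => F.parent u = some v) := by
              simpa using hw
            simpa [hu] using this
        rw [if_pos ⟨hl, hr⟩, if_neg hl]
        omega
  have hs := Finset.sum_le_sum (fun v (_ : v ∈ (Finset.univ : Finset F.V)) => key v)
  rw [Finset.sum_add_distrib, Finset.sum_add_distrib, ← Finset.card_filter,
    ← Finset.card_filter] at hs
  simp only [Finset.sum_const, Finset.card_univ, smul_eq_mul, mul_one] at hs
  have key2 : ∀ v : F.V, 1 ≤ (if F.Leaf v then 1 else 0)
      + ((if ¬ F.Leaf v ∧ ¬ F.Rt v then 1 else 0) + (if F.Rt v then 1 else 0)) := by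
    intro v
    by_cases hl : F.Leaf v <;> by_cases hr : F.Rt v <;> simp [hl, hr]
  have hs2 := Finset.sum_le_sum (fun v (_ : v ∈ (Finset.univ : Finset F.V)) => key2 v)
  rw [Finset.sum_add_distrib, Finset.sum_add_distrib, ← Finset.card_filter,
    ← Finset.card_filter, ← Finset.card_filter] at hs2
  simp only [Finset.sum_const, Finset.card_univ, smul_eq_mul, mul_one] at hs2
  constructor <;> omega

/-- Node names: leaves, inner non-roots, inner roots. -/
structure MForest.Naming (F : MForest Qp Qm χ ℓ) (m : ℕ)
    (ν : F.V → Qm ⊕ (Fin m ⊕ Qp)) : Prop where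
  inj : Function.Injective ν
  leaf : ∀ v, F.Leaf v → ν v = Sum.inl (F.leafLab v)
  root : ∀ v, ¬ F.Leaf v → F.Rt v → ν v = Sum.inr (Sum.inr (F.rootLab v))
  mid : ∀ v, ¬ F.Leaf v → ¬ F.Rt v → ∃ i, ν v = Sum.inr (Sum.inl i)

open Classical in
theorem MForest.exists_naming [Fintype Qm] (F : MForest Qp Qm χ ℓ) :
    ∃ ν, F.Naming (Fintype.card Qm - 1) ν := by
  have hc : Fintype.card {v : F.V // ¬ F.Leaf v ∧ ¬ F.Rt v} ≤
      Fintype.card (Fin (Fintype.card Qm - 1)) := by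
    rw [Fintype.card_fin, Fintype.card_subtype]
    have h := F.counts.1
    rcases Nat.eq_zero_or_pos
      (Finset.univ.filter fun v : F.V => ¬ F.Leaf v ∧ ¬ F.Rt v).card with h0 | h0
    · omega
    · obtain ⟨v, -⟩ := Finset.card_pos.1 h0
      obtain ⟨w, hw⟩ := F.exists_root v
      have : 0 < (Finset.univ.filter fun v : F.V => F.Rt v).card :=
        Finset.card_pos.2 ⟨w, by simp [hw]⟩
      omega
  obtain ⟨f⟩ := Function.Embedding.nonempty_of_card_le hc
  let ν : F.V → Qm ⊕ (Fin (Fintype.card Qm - 1) ⊕ Qp) := fun v =>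
    if hl : F.Leaf v then Sum.inl (F.leafLab v)
    else if hr : F.Rt v then Sum.inr (Sum.inr (F.rootLab v))
    else Sum.inr (Sum.inl (f ⟨v, hl, hr⟩))
  refine ⟨ν, ?_, ?_, ?_, ?_⟩
  · intro u v h
    simp only [ν] at h
    split_ifs at h with h1 h2 h3 h4 h5 h6 h7 h8
    all_goals simp at h
    · exact F.leaf_inj u v h1 h2 h
    · exact F.root_inj u v (by assumption) (by assumption) h
    · exact h
  · intro v h; simp [ν, h]
  · intro v h h'; simp [ν, h, h']
  · intro v h h'; simp [ν, h, h']

def emb {m : ℕ} : Qm ⊕ Fin m → Qm ⊕ (Fin m ⊕ Qp)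
  | Sum.inl q => Sum.inl q
  | Sum.inr i => Sum.inr (Sum.inl i)

def MForest.Val (F : MForest Qp Qm χ ℓ) {m : ℕ} (ν : F.V → Qm ⊕ (Fin m ⊕ Qp))
    (v : F.V) (y : Qp ⊕ (Fin m ⊕ Qp)) : Prop :=
  (F.parent v = none ∧ y = Sum.inl (F.rootLab v)) ∨
    ∃ u, F.parent v = some u ∧ ∃ z, ν u = Sum.inr z ∧ y = Sum.inr z

/-- The pair `C, t` is a code of the forest. -/
def MForest.Coded (F : MForest Qp Qm χ ℓ) (m : ℕ)
    (C : Qm ⊕ Fin m → Option (Qp ⊕ (Fin m ⊕ Qp))) (t : Qm → χ → Fin ℓ) : Prop :=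
  ∃ ν, F.Naming m ν ∧
    (∀ κ y, C κ = some y ↔ ∃ v, ν v = emb κ ∧ F.Val ν v y) ∧
    ∀ v, F.Leaf v → ∀ c, (t (F.leafLab v) c : ℕ) = F.tup v c

theorem exists_fun {K Y : Type} (R : K → Y → Prop)
    (h : ∀ k y y', R k y → R k y' → y = y') :
    ∃ C : K → Option Y, ∀ k y, C k = some y ↔ R k y := by
  classical
  refine ⟨fun k => if hk : ∃ y, R k y then some hk.choose else none, ?_⟩
  intro k y
  by_cases hk : ∃ y, R k y
  · simp only [hk, dif_pos, Option.some.injEq]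
    constructor
    · rintro rfl; exact hk.choose_spec
    · intro hy; exact h k _ _ hk.choose_spec hy
  · simp only [hk, dif_neg, not_false_eq_true]
    constructor
    · intro h; cases h
    · intro hy; exact absurd ⟨y, hy⟩ hk

theorem MForest.exists_coded [Fintype Qm] (hl : 0 < ℓ) (F : MForest Qp Qm χ ℓ) :
    ∃ C t, F.Coded (Fintype.card Qm - 1) C t := by
  classical
  obtain ⟨ν, hν⟩ := F.exists_naming
  obtain ⟨C, hC⟩ := exists_fun (fun κ y => ∃ v, ν v = emb κ ∧ F.Val ν v y) (by
    rintro κ y y' ⟨v, hv, hy⟩ ⟨w, hw, hy'⟩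
    obtain rfl : v = w := hν.inj (hv.trans hw.symm)
    rcases hy with ⟨h1, rfl⟩ | ⟨u, h1, z, h2, rfl⟩ <;>
      rcases hy' with ⟨h1', rfl⟩ | ⟨u', h1', z', h2', rfl⟩
    · rfl
    · simp [h1] at h1'
    · simp [h1] at h1'
    · rw [h1] at h1'
      cases h1'
      rw [h2] at h2'
      cases h2'
      rfl)
  refine ⟨C, fun q c => if h : ∃ v, F.Leaf v ∧ F.leafLab v = q then
      ⟨F.tup h.choose c, F.tup_lt _ h.choose_spec.1 c⟩ else ⟨0, hl⟩, ν, hν, hC, ?_⟩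
  intro v hv c
  have h : ∃ w, F.Leaf w ∧ F.leafLab w = F.leafLab v := ⟨v, hv, rfl⟩
  have e : h.choose = v := F.leaf_inj _ _ h.choose_spec.1 hv h.choose_spec.2
  beta_reduce
  rw [dif_pos h]
  exact congrArg (fun w => F.tup w c) e

theorem MForest.Naming.leaf_of {F : MForest Qp Qm χ ℓ} {m : ℕ} {ν}
    (h : F.Naming m ν) {v q} (hv : ν v = Sum.inl q) : F.Leaf v ∧ F.leafLab v = q := by
  by_cases hl : F.Leaf v
  · refine ⟨hl, ?_⟩
    have := h.leaf v hl
    rw [hv] at this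
    cases this; rfl
  · exfalso
    by_cases hr : F.Rt v
    · have := h.root v hl hr
      rw [hv] at this; cases this
    · obtain ⟨i, hi⟩ := h.mid v hl hr
      rw [hv] at hi; cases hi

theorem MForest.Naming.root_of {F : MForest Qp Qm χ ℓ} {m : ℕ} {ν}
    (h : F.Naming m ν) {v x} (hv : ν v = Sum.inr (Sum.inr x)) :
    F.Rt v ∧ F.rootLab v = x := by
  by_cases hl : F.Leaf v
  · have := h.leaf v hl
    rw [hv] at this; cases this
  · by_cases hr : F.Rt v
    · refine ⟨hr, ?_⟩
      have := h.root v hl hr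
      rw [hv] at this; cases this; rfl
    · obtain ⟨i, hi⟩ := h.mid v hl hr
      rw [hv] at hi; cases hi

theorem MForest.Naming.inr_of {F : MForest Qp Qm χ ℓ} {m : ℕ} {ν}
    (h : F.Naming m ν) {v u} (hv : F.parent v = some u) : ∃ z, ν u = Sum.inr z := by
  cases hz : ν u with
  | inl q => exact absurd hv ((h.leaf_of hz).1 v)
  | inr z => exact ⟨z, rfl⟩

theorem MForest.Naming.exists_val {F : MForest Qp Qm χ ℓ} {m : ℕ} {ν}
    (h : F.Naming m ν) (v) : ∃ y, F.Val ν v y := by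
  cases hv : F.parent v with
  | none => exact ⟨_, Or.inl ⟨hv, rfl⟩⟩
  | some u =>
    obtain ⟨z, hz⟩ := h.inr_of hv
    exact ⟨_, Or.inr ⟨u, hv, z, hz, rfl⟩⟩

/-- Nodes that are leaves or non-roots have a name in the range of `emb`. -/
theorem MForest.Naming.emb_of {F : MForest Qp Qm χ ℓ} {m : ℕ} {ν}
    (h : F.Naming m ν) (v) (hv : F.Leaf v ∨ ¬ F.Rt v) : ∃ κ, ν v = emb κ := by
  by_cases hl : F.Leaf v
  · exact ⟨Sum.inl _, h.leaf v hl⟩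
  · obtain ⟨i, hi⟩ := h.mid v hl (hv.resolve_left hl)
    exact ⟨Sum.inr i, hi⟩

theorem transfer {F G : MForest Qp Qm χ ℓ} {m : ℕ}
    {C : Qm ⊕ Fin m → Option (Qp ⊕ (Fin m ⊕ Qp))} {νF νG}
    (hF : F.Naming m νF) (hCF : ∀ κ y, C κ = some y ↔ ∃ v, νF v = emb κ ∧ F.Val νF v y)
    (hCG : ∀ κ y, C κ = some y ↔ ∃ v, νG v = emb κ ∧ G.Val νG v y) (v : F.V) :
    ∃ w, νG w = νF v := by
  by_cases hv : F.Leaf v ∨ ¬ F.Rt v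
  · obtain ⟨κ, hκ⟩ := hF.emb_of v hv
    obtain ⟨y, hy⟩ := hF.exists_val v
    obtain ⟨w, hw, -⟩ := (hCG κ y).1 ((hCF κ y).2 ⟨v, hκ, hy⟩)
    exact ⟨w, hw.trans hκ.symm⟩
  · push Not at hv
    obtain ⟨hl, hr⟩ := hv
    have hl' := hl
    unfold MForest.Leaf at hl'
    push Not at hl'
    obtain ⟨u, hu⟩ := hl'
    obtain ⟨κ, hκ⟩ := hF.emb_of u (Or.inr (by unfold MForest.Rt; simp [hu]))
    have hz := hF.root v hl hr
    obtain ⟨w, hw, hval⟩ := (hCG κ _).1 ((hCF κ _).2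
      ⟨u, hκ, Or.inr ⟨v, hu, _, hz, rfl⟩⟩)
    rcases hval with ⟨_, h⟩ | ⟨w', _, z, hz', h⟩
    · cases h
    · cases h
      exact ⟨w', hz'.trans hz.symm⟩

theorem iso_of_coded {F G : MForest Qp Qm χ ℓ} {m : ℕ} {C t}
    (h1 : F.Coded m C t) (h2 : G.Coded m C t) : MFIso F G := by
  obtain ⟨νF, hF, hCF, htF⟩ := h1
  obtain ⟨νG, hG, hCG, htG⟩ := h2
  choose e he using transfer hF hCF hCG
  choose e' he' using transfer hG hCG hCF
  let E : F.V ≃ G.V := ⟨e, e', fun v => hF.inj (by rw [he', he]),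
    fun v => hG.inj (by rw [he, he'])⟩
  have hval : ∀ v, (F.Leaf v ∨ ¬ F.Rt v) → ∀ y, F.Val νF v y → G.Val νG (e v) y := by
    intro v hv y hy
    obtain ⟨κ, hκ⟩ := hF.emb_of v hv
    obtain ⟨w, hw, hwy⟩ := (hCG κ y).1 ((hCF κ y).2 ⟨v, hκ, hy⟩)
    have : w = e v := hG.inj (by rw [hw, he, hκ])
    rwa [← this]
  refine ⟨E, ?_, ?_, ?_⟩
  · intro v
    change G.parent (e v) = Option.map e (F.parent v)
    by_cases hv : F.Leaf v ∨ ¬ F.Rt v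
    · obtain ⟨y, hy⟩ := hF.exists_val v
      have hy' := hval v hv y hy
      rcases hy with ⟨h1, rfl⟩ | ⟨u, h1, z, h2, rfl⟩ <;>
        rcases hy' with ⟨h1', h⟩ | ⟨u', h1', z', h2', h⟩
      · rw [h1, h1']; rfl
      · cases h
      · cases h
      · cases h
        rw [h1, h1']
        simp only [Option.map_some, Option.some.injEq]
        exact hG.inj (by rw [h2', he, h2])
    · push Not at hv
      have hr : F.parent v = none := hv.2
      have := hF.root v hv.1 hv.2
      rw [← he v] at this
      rw [hr]
      exact (hG.root_of this).1
  · intro v hv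
    have := hF.leaf v hv
    rw [← he v] at this
    obtain ⟨hl, hq⟩ := hG.leaf_of this
    refine ⟨hq.symm, fun c => ?_⟩
    change F.tup v c = G.tup (e v) c
    rw [← htF v hv c, ← htG _ hl c, hq]
  · intro v hv
    change F.rootLab v = G.rootLab (e v)
    by_cases hl : F.Leaf v
    · rcases hval v (Or.inl hl) _ (Or.inl ⟨hv, rfl⟩) with ⟨_, h⟩ | ⟨_, _, _, _, h⟩
      · exact Sum.inl.inj h
      · cases h
    · have := hF.root v hl hv
      rw [← he v] at this
      exact (hG.root_of this).2.symm

end Aux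

/-- Let `Q = Q⁺ ⊎ Q⁻` have size `n > 0` with `Q⁺ ≠ ∅`, let `χ` have size
`k` and let `ℓ > 0`.  Every merging forest on `(Q, χ, ℓ)` has at most `2n-2` nodes and at
most `2n-2` edges, and the number of merging forests on `(Q, χ, ℓ)` (counted up to
isomorphism) is finite and at most `ℓ^(k(n-1))·(2n-1)^(2n-3)`, the bound being read in the
nonnegative reals (the exponent `2n-3` being an integer). -/
theorem merging_forest_count (Qp Qm χ : Type) [Fintype Qp] [Fintype Qm] [Fintype χ]
    (n k ℓ : ℕ) (hn : 0 < n)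
    (hcard : Fintype.card Qp + Fintype.card Qm = n)
    (hQp : Nonempty Qp) (hk : Fintype.card χ = k) (hl : 0 < ℓ) :
    (∀ F : MForest Qp Qm χ ℓ,
        Nat.card F.V ≤ 2 * n - 2 ∧
        Nat.card {v : F.V // F.parent v ≠ none} ≤ 2 * n - 2) ∧
    Finite (Quot (@MFIso Qp Qm χ ℓ)) ∧
    (Nat.card (Quot (@MFIso Qp Qm χ ℓ)) : NNReal) ≤
      (ℓ : NNReal) ^ (k * (n - 1)) * ((2 * n - 1 : ℕ) : NNReal) ^ (2 * (n : ℤ) - 3) := by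
  classical
  have hp : 0 < Fintype.card Qp := Fintype.card_pos
  refine ⟨?_, ?_⟩
  · intro F
    have h := F.counts.2
    have h1 : Nat.card {v : F.V // F.parent v ≠ none} ≤ Nat.card F.V :=
      Nat.card_le_card_of_injective _ Subtype.val_injective
    rw [Nat.card_eq_fintype_card (α := F.V)] at *
    omega
  · choose C t hCt using fun F : MForest Qp Qm χ ℓ => F.exists_coded hl
    let f : Quot (@MFIso Qp Qm χ ℓ) →
        (Qm ⊕ Fin (Fintype.card Qm - 1) → Option (Qp ⊕ (Fin (Fintype.card Qm - 1) ⊕ Qp))) ×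
          (Qm → χ → Fin ℓ) := fun x => (C x.out, t x.out)
    have hf : Function.Injective f := by
      intro x y hxy
      simp only [f, Prod.mk.injEq] at hxy
      have hx := hCt x.out
      rw [hxy.1, hxy.2] at hx
      have := Quot.sound (iso_of_coded hx (hCt y.out))
      rwa [Quot.out_eq, Quot.out_eq] at this
    refine ⟨Finite.of_injective f hf, ?_⟩
    have hle := Nat.card_le_card_of_injective f hf
    rw [Nat.card_eq_fintype_card (α := _ × _)] at hle
    simp only [Fintype.card_prod, Fintype.card_fun, Fintype.card_sum, Fintype.card_fin,
      Fintype.card_option, hk] at hle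
    generalize hm : Fintype.card Qm = m at *
    generalize hpp : Fintype.card Qp = p at *
    rcases Nat.eq_zero_or_pos m with rfl | hmpos
    · have h1 : Nat.card (Quot (@MFIso Qp Qm χ ℓ)) ≤ 1 := by simpa using hle
      refine le_trans (b := (1 : NNReal)) (by exact_mod_cast h1) ?_
      have ha : (1 : NNReal) ≤ (ℓ : NNReal) ^ (k * (n - 1)) :=
        one_le_pow₀ (by exact_mod_cast hl)
      have hb : (1 : NNReal) ≤ ((2 * n - 1 : ℕ) : NNReal) ^ (2 * (n : ℤ) - 3) := by
        rcases Nat.lt_or_ge n 2 with h | h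
        · obtain rfl : n = 1 := by omega
          simp
        · apply one_le_zpow₀
          · exact_mod_cast (by omega : 1 ≤ 2 * n - 1)
          · omega
      exact one_le_mul ha hb
    · have hz : (2 * (n : ℤ) - 3) = ((2 * n - 3 : ℕ) : ℤ) := by omega
      rw [hz, zpow_natCast]
      have : Nat.card (Quot (@MFIso Qp Qm χ ℓ)) ≤
          ℓ ^ (k * (n - 1)) * (2 * n - 1) ^ (2 * n - 3) := by
        refine hle.trans ?_
        rw [mul_comm]
        refine Nat.mul_le_mul ?_ ?_
        · rw [← pow_mul]
          exact Nat.pow_le_pow_right hl (Nat.mul_le_mul_left _ (by omega))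
        · exact (Nat.pow_le_pow_left (by omega) _).trans
            (Nat.pow_le_pow_right (by omega) (by omega))
      exact_mod_cast this

end Paper
end
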